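/- Let p ∈ [1,2]. There exists a sequence (x^{(j)})_{j≥1} in ℓ_p(ℂ) such that the series ∑_j x^{(j)} is unconditionally summable (the family is summable) and ∑_{j=1}^∞ ‖x^{(j)}‖_p^{2−ε} = ∞ for every ε > 0. -/

import Mathlib

/-!
The characters of a finite abelian group `G` are unimodular and orthonormal in `L²(G)` for the
uniform probability measure. As the `L^p` norm of a probability measure is dominated by the `L²`
norm for `p ≤ 2`, they form a system of unit vectors of `L^p(G)`, and hence of `ℓ_p`, in which the
sum of any `m` members has norm at most `√m`.

If a Banach space contains such systems of every size, take for each `n` a system of `4 ^ n²`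
vectors and scale it by `2 ^ -(n² + n)`. The subsums of the `n`-th block then have norm at most
`2 ^ -n`, so that the union of the blocks is summable, while the `r`-th powers of the norms in the
`n`-th block add up to `4 ^ n² * 2 ^ (-(n² + n) * r)`, which is large for large `n` whenever
`r < 2`.
-/

open scoped ENNReal
open scoped BigOperators Finset

section Sigma

variable {ι : Type*} {β : ι → Type*}

theorem summable_sigma_of_norm_sum_le [∀ i, Finite (β i)] {E : Type*} [NormedAddCommGroup E]
    [CompleteSpace E] {y : (Σ i, β i) → E} {b : ι → ℝ} (hb : Summable b)
    (hy : ∀ i (s : Finset (β i)), ‖∑ j ∈ s, y ⟨i, j⟩‖ ≤ b i) : Summable y := by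
  classical
  have (i : ι) : Fintype (β i) := Fintype.ofFinite (β i)
  rw [summable_iff_vanishing_norm]
  intro ε hε
  obtain ⟨s, hs⟩ := summable_iff_vanishing_norm.1 hb ε hε
  refine ⟨s.sigma fun _ ↦ Finset.univ, fun t ht ↦ ?_⟩
  have hdisj : Disjoint (t.image Sigma.fst) s := by
    simp only [Finset.disjoint_left, Finset.mem_sigma, Finset.mem_univ, and_true,
      Finset.mem_image, forall_exists_index, and_imp] at ht ⊢
    rintro _ i hi rfl
    exact ht hi
  rw [← t.sigma_image_fst_preimage_mk, Finset.sum_sigma]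
  calc ‖∑ i ∈ t.image Sigma.fst, ∑ j ∈ t.preimage (Sigma.mk i) sigma_mk_injective.injOn, y ⟨i, j⟩‖
      ≤ ∑ i ∈ t.image Sigma.fst, b i := norm_sum_le_of_le _ fun i _ ↦ hy i _
    _ ≤ ‖∑ i ∈ t.image Sigma.fst, b i‖ := Real.le_norm_self _
    _ < ε := hs _ hdisj

theorem not_summable_sigma_of_frequently_le_sum [∀ i, Fintype (β i)] {f : (Σ i, β i) → ℝ}
    {c : ℝ} (hc : 0 < c) (hf : ∃ᶠ i in Filter.cofinite, c ≤ ∑ j, f ⟨i, j⟩) : ¬ Summable f := by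
  intro hsum
  have hlim := hsum.sigma.tendsto_cofinite_zero
  simp only [tsum_fintype] at hlim
  exact hf ((hlim.eventually_lt_const hc).mono fun _ ↦ not_le.2)

end Sigma

theorem one_le_two_pow_mul_half_pow_rpow {ε : ℝ} {n : ℕ} (h : 2 ≤ ε * (n + 1)) :
    1 ≤ (2 : ℝ) ^ (2 * n ^ 2) * ((1 / 2 : ℝ) ^ (n ^ 2 + n)) ^ (2 - ε) := by
  have hexp : (2 : ℝ) ^ (2 * n ^ 2) * ((1 / 2 : ℝ) ^ (n ^ 2 + n)) ^ (2 - ε) =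
      2 ^ (n * (ε * (n + 1) - 2)) := by
    rw [one_div, inv_pow, ← Real.rpow_natCast, ← Real.rpow_natCast, ← Real.rpow_neg two_pos.le,
      ← Real.rpow_mul two_pos.le, ← Real.rpow_add two_pos]
    push_cast
    ring_nf
  rw [hexp]
  exact Real.one_le_rpow one_le_two (mul_nonneg n.cast_nonneg (sub_nonneg.2 h))

theorem half_pow_mul_sqrt_two_pow (n : ℕ) :
    (1 / 2 : ℝ) ^ (n ^ 2 + n) * √(2 ^ (2 * n ^ 2)) = (1 / 2) ^ n := by
  rw [mul_comm 2, pow_mul, Real.sqrt_sq (by positivity), pow_add, mul_right_comm, ← mul_pow]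
  norm_num

theorem exists_summable_not_summable_norm_rpow_of_norm_sum_le_sqrt {E : Type*}
    [NormedAddCommGroup E] [NormedSpace ℝ E] [CompleteSpace E] {C : ℝ}
    (h : ∀ N : ℕ, N ≠ 0 → ∃ v : Fin N → E,
      (∀ j, ‖v j‖ = 1) ∧ ∀ s : Finset (Fin N), ‖∑ j ∈ s, v j‖ ≤ C * √N) :
    ∃ x : ℕ → E, Summable x ∧ ∀ ε : ℝ, 0 < ε → ¬ Summable (fun j ↦ ‖x j‖ ^ (2 - ε)) := by
  choose v hv_norm hv_sum using fun n : ℕ ↦ h (2 ^ (2 * n ^ 2)) (by positivity)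
  let y : (Σ n : ℕ, Fin (2 ^ (2 * n ^ 2))) → E := fun i ↦ (1 / 2 : ℝ) ^ (i.1 ^ 2 + i.1) • v i.1 i.2
  have hy_norm (n : ℕ) (j) : ‖y ⟨n, j⟩‖ = (1 / 2) ^ (n ^ 2 + n) := by
    simp [y, norm_smul, hv_norm]
  have hy_sum (n : ℕ) (s : Finset (Fin (2 ^ (2 * n ^ 2)))) :
      ‖∑ j ∈ s, y ⟨n, j⟩‖ ≤ C * (1 / 2) ^ n := by
    calc ‖∑ j ∈ s, y ⟨n, j⟩‖ = (1 / 2) ^ (n ^ 2 + n) * ‖∑ j ∈ s, v n j‖ := by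
          simp only [y, ← Finset.smul_sum, norm_smul, norm_pow, norm_div, norm_one, Real.norm_ofNat]
      _ ≤ (1 / 2) ^ (n ^ 2 + n) * (C * √(2 ^ (2 * n ^ 2) : ℕ)) := by gcongr; exact hv_sum n s
      _ = C * (1 / 2) ^ n := by
          rw [mul_left_comm, Nat.cast_pow, Nat.cast_ofNat, half_pow_mul_sqrt_two_pow]
  obtain ⟨e⟩ : Nonempty (ℕ ≃ Σ n : ℕ, Fin (2 ^ (2 * n ^ 2))) := nonempty_equiv_of_countable
  refine ⟨y ∘ e, e.summable_iff.2 <|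
    summable_sigma_of_norm_sum_le (summable_geometric_two.mul_left C) hy_sum, fun ε hε hsum ↦ ?_⟩
  refine not_summable_sigma_of_frequently_le_sum one_pos ?_
    ((e.summable_iff (f := fun i ↦ ‖y i‖ ^ (2 - ε))).1 hsum)
  rw [Nat.cofinite_eq_atTop]
  have hlarge : ∀ᶠ n : ℕ in Filter.atTop, 2 ≤ ε * (n + 1) :=
    ((Filter.tendsto_atTop_add_const_right _ 1 tendsto_natCast_atTop_atTop).const_mul_atTop
      hε).eventually_ge_atTop 2
  refine (hlarge.mono fun n hn ↦ ?_).frequently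
  simpa [hy_norm] using one_le_two_pow_mul_half_pow_rpow hn

theorem rpow_expect_rpow_le_rpow_expect_rpow {α : Type*} (s : Finset α) {f : α → ℝ}
    (hf : ∀ x ∈ s, 0 ≤ f x) {q r : ℝ} (hq : 0 < q) (hqr : q ≤ r) :
    (𝔼 x ∈ s, f x ^ q) ^ q⁻¹ ≤ (𝔼 x ∈ s, f x ^ r) ^ r⁻¹ := by
  have hr : 0 < r := hq.trans_le hqr
  obtain rfl | hs := s.eq_empty_or_nonempty
  · simp [hq.ne', hr.ne']
  have hmean_nonneg : 0 ≤ 𝔼 x ∈ s, f x ^ q :=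
    Finset.expect_nonneg fun x hx ↦ Real.rpow_nonneg (hf x hx) q
  have hjensen : (𝔼 x ∈ s, f x ^ q) ^ (r / q) ≤ 𝔼 x ∈ s, f x ^ r := by
    have hweights : ∑ _x ∈ s, (#s : ℝ)⁻¹ = 1 := by simp [hs.ne_empty]
    have h := Real.rpow_arith_mean_le_arith_mean_rpow s (fun _ ↦ (#s : ℝ)⁻¹) (fun x ↦ f x ^ q)
      (fun _ _ ↦ by positivity) hweights (fun x hx ↦ Real.rpow_nonneg (hf x hx) q)
      ((one_le_div hq).2 hqr)
    rw [← Finset.mul_sum, ← Finset.mul_sum, inv_mul_eq_div, inv_mul_eq_div,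
      ← Finset.expect_eq_sum_div_card, ← Finset.expect_eq_sum_div_card] at h
    refine h.trans_eq (Finset.expect_congr rfl fun x hx ↦ ?_)
    rw [← Real.rpow_mul (hf x hx), mul_div_cancel₀ _ hq.ne']
  calc (𝔼 x ∈ s, f x ^ q) ^ q⁻¹ = ((𝔼 x ∈ s, f x ^ q) ^ (r / q)) ^ r⁻¹ := by
        rw [← Real.rpow_mul hmean_nonneg]
        congr 1
        field_simp
    _ ≤ (𝔼 x ∈ s, f x ^ r) ^ r⁻¹ := by gcongr

theorem norm_sum_lp_single_embedding_rpow {ι G E : Type*} [DecidableEq ι] [Fintype G]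
    [NormedAddCommGroup E] {p : ℝ≥0∞} (hp : 0 < p.toReal) (g : G ↪ ι) (f : G → E) :
    ‖∑ x, lp.single (E := fun _ : ι ↦ E) p (g x) (f x)‖ ^ p.toReal = ∑ x, ‖f x‖ ^ p.toReal := by
  simpa [Finset.sum_map, g.injective.extend_apply] using
    lp.norm_sum_single hp (Function.extend g f 0) (Finset.univ.map g)

section NormalizedEmbedding

variable {ι G E : Type*} [Fintype G] [NormedAddCommGroup E] [NormedSpace ℝ E]

open scoped Classical in
/-- The embedding into `ℓ_p(ι)` of the space `L^p(G)` of functions on a finite set `G ⊆ ι`, where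
`G` carries the uniform probability measure. The inclusion is given by `g : G ↪ ι`; passing from
counting measure to probability measure is the factor `|G| ^ (-1 / p)`. -/
noncomputable def normalizedEmbedding (p : ℝ≥0∞) (g : G ↪ ι) :
    (G → E) →ₗ[ℝ] lp (fun _ : ι ↦ E) p :=
  (Fintype.card G : ℝ) ^ (-p.toReal⁻¹) •
    ∑ x, lp.lsingle (E := fun _ : ι ↦ E) p (g x) ∘ₗ LinearMap.proj x

variable {p : ℝ≥0∞} [Fact (1 ≤ p)] (g : G ↪ ι) (f : G → E)

theorem norm_normalizedEmbedding (hp : p ≠ ∞) :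
    ‖normalizedEmbedding p g f‖ = (𝔼 x, ‖f x‖ ^ p.toReal) ^ p.toReal⁻¹ := by
  classical
  have hq : 0 < p.toReal := ENNReal.toReal_pos (one_pos.trans_le Fact.out).ne' hp
  have hcard : (0 : ℝ) ≤ Fintype.card G := Nat.cast_nonneg _
  calc ‖normalizedEmbedding p g f‖
      = (Fintype.card G : ℝ) ^ (-p.toReal⁻¹) *
          ‖∑ x, lp.single (E := fun _ : ι ↦ E) p (g x) (f x)‖ := by
        simp [normalizedEmbedding, norm_smul, Real.norm_of_nonneg (Real.rpow_nonneg hcard _)]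
    _ = (Fintype.card G : ℝ) ^ (-p.toReal⁻¹) * (∑ x, ‖f x‖ ^ p.toReal) ^ p.toReal⁻¹ := by
        rw [← norm_sum_lp_single_embedding_rpow hq g f, Real.rpow_rpow_inv (norm_nonneg _) hq.ne']
    _ = (𝔼 x, ‖f x‖ ^ p.toReal) ^ p.toReal⁻¹ := by
        rw [Fintype.expect_eq_sum_div_card, Real.div_rpow (by positivity) hcard,
          Real.rpow_neg hcard, inv_mul_eq_div]

theorem norm_normalizedEmbedding_le_sqrt (hp : p ≤ 2) :
    ‖normalizedEmbedding p g f‖ ≤ √(𝔼 x, ‖f x‖ ^ 2) := by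
  have hp_top : p ≠ ∞ := ne_top_of_le_ne_top ENNReal.ofNat_ne_top hp
  have hq : 0 < p.toReal := ENNReal.toReal_pos (one_pos.trans_le Fact.out).ne' hp_top
  have hq2 : p.toReal ≤ 2 := ENNReal.toReal_le_of_le_ofReal two_pos.le (by simpa using hp)
  simpa [norm_normalizedEmbedding g f hp_top, Real.sqrt_eq_rpow] using
    rpow_expect_rpow_le_rpow_expect_rpow Finset.univ (fun x _ ↦ norm_nonneg (f x)) hq hq2

end NormalizedEmbedding

section Characters

variable {G 𝕜 : Type*} [AddCommGroup G] [Fintype G] [RCLike 𝕜]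

theorem expect_norm_sum_addChar_sq (S : Finset (AddChar G 𝕜)) :
    𝔼 x, ‖∑ ψ ∈ S, ψ x‖ ^ 2 = (#S : ℝ) := by
  classical
  have h : (𝔼 x, (‖∑ ψ ∈ S, ψ x‖ : 𝕜) ^ 2) = #S := by
    calc (𝔼 x, (‖∑ ψ ∈ S, ψ x‖ : 𝕜) ^ 2)
        = 𝔼 x, ∑ φ ∈ S, ∑ ψ ∈ S, inner 𝕜 (φ x) (ψ x) := by
          simp only [← inner_self_eq_norm_sq_to_K, sum_inner, inner_sum]
          exact Finset.expect_congr rfl fun x _ ↦ Finset.sum_comm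
      _ = ∑ φ ∈ S, ∑ ψ ∈ S, RCLike.wInner RCLike.cWeight (φ : G → 𝕜) ψ := by
          simp only [RCLike.wInner_cWeight_eq_expect, Finset.expect_sum_comm]
      _ = #S := by
          simp [AddChar.wInner_cWeight_eq_boole]
  apply RCLike.ofReal_injective (K := 𝕜)
  simpa using h

variable {ι : Type*} {p : ℝ≥0∞} [Fact (1 ≤ p)] (g : G ↪ ι)

theorem norm_normalizedEmbedding_addChar (hp : p ≠ ∞) (ψ : AddChar G 𝕜) :
    ‖normalizedEmbedding p g ψ‖ = 1 := by
  simp [norm_normalizedEmbedding g _ hp]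

theorem norm_sum_normalizedEmbedding_addChar_le (hp : p ≤ 2) (S : Finset (AddChar G 𝕜)) :
    ‖∑ ψ ∈ S, normalizedEmbedding p g ψ‖ ≤ √(#S) := by
  rw [← map_sum, ← expect_norm_sum_addChar_sq S]
  simpa using norm_normalizedEmbedding_le_sqrt g (∑ ψ ∈ S, ⇑ψ) hp

end Characters

theorem exists_norm_eq_one_norm_sum_le_sqrt_card {ι : Type*} [Infinite ι] {p : ℝ≥0∞}
    [Fact (1 ≤ p)] (hp2 : p ≤ 2) {N : ℕ} (hN : N ≠ 0) :
    ∃ v : Fin N → lp (fun _ : ι ↦ ℂ) p,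
      (∀ j, ‖v j‖ = 1) ∧ ∀ s : Finset (Fin N), ‖∑ j ∈ s, v j‖ ≤ √(#s) := by
  have : NeZero N := ⟨hN⟩
  let g : ZMod N ↪ ι :=
    Function.Embedding.trans ⟨ZMod.val, ZMod.val_injective N⟩ (Infinite.natEmbedding ι)
  let e : Fin N ≃ AddChar (ZMod N) ℂ := (Fintype.equivFinOfCardEq (by simp)).symm
  refine ⟨fun j ↦ normalizedEmbedding p g (e j), fun j ↦ ?_, fun s ↦ ?_⟩
  · exact norm_normalizedEmbedding_addChar g (ne_top_of_le_ne_top ENNReal.ofNat_ne_top hp2) (e j)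
  · simpa using norm_sum_normalizedEmbedding_addChar_le g hp2 (s.map e.toEmbedding)

theorem exists_summable_not_rpow_summable_complex_general {ι : Type*} [Infinite ι]
    (p : ℝ≥0∞) [Fact (1 ≤ p)] (hp2 : p ≤ 2) :
    ∃ x : ℕ → lp (fun _ : ι ↦ ℂ) p,
      Summable x ∧ ∀ ε : ℝ, 0 < ε → ¬ Summable (fun j : ℕ ↦ ‖x j‖ ^ (2 - ε)) := by
  refine exists_summable_not_summable_norm_rpow_of_norm_sum_le_sqrt (C := 1) fun N hN ↦ ?_
  obtain ⟨v, hv_norm, hv_sum⟩ := exists_norm_eq_one_norm_sum_le_sqrt_card (ι := ι) hp2 hN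
  refine ⟨v, hv_norm, fun s ↦ ?_⟩
  calc ‖∑ j ∈ s, v j‖ ≤ √(#s) := hv_sum s
    _ ≤ 1 * √N := by
        rw [one_mul]
        gcongr
        exact card_finset_fin_le s

/-- **Dvoretzky–Rogers-type statement for `ℓ_p(ℂ)`, `1 ≤ p ≤ 2`.**
There is an unconditionally summable sequence `(x⁽ʲ⁾)` in `ℓ_p(ℂ)` with
`∑_j ‖x⁽ʲ⁾‖^{2-ε} = ∞` for every `ε > 0`. -/
theorem exists_summable_not_rpow_summable_complex
    (p : ℝ≥0∞) [Fact (1 ≤ p)] (hp2 : p ≤ 2) :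
    ∃ x : ℕ → lp (fun _ : ℕ => ℂ) p,
      Summable x ∧ ∀ ε : ℝ, 0 < ε → ¬ Summable (fun j : ℕ => ‖x j‖ ^ (2 - ε)) :=
  exists_summable_not_rpow_summable_complex_general p hp2
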